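/- arXiv:math/9207203 — 2 statements merged into one kernel-verified Lean document; each statement's English description precedes it below -/
import Mathlib

section
/- Player TWO has a winning 2-tactic in the game SMG(J_ℝ). -/
/-!
The argument first moves to the Cantor space `ℕ → Fin 2` through the maps
`phi z y = z + 0.y₀y₁y₂…` (`z : ℤ`), which jointly cover `ℝ`; nowhere dense sets go to nowhere dense
sets in both directions (`isND_preimage`, `isNowhereDense_image`).

In the Cantor space every meagre set is covered by a set of the form
`⋃ p, K (x, I) p`, where `I` is a partition of (a tail of) `ℕ` into consecutive finite intervals,
`x` is a point, and the nowhere dense set `K (x, I) p` consists of the `y` which differ from `x` on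
every interval of `I` starting at or after `p` (`exists_cover`). Fix such a code `c A` for every
meagre `A`. TWO always plays (the image of) `K (double (c Oₙ)) p` for a suitable `p`, where `double`
glues the intervals together in pairs.

Since `Tₙ ⊆ Oₙ₊₁`, the set `K (double (c Oₙ)) p` is covered by the code of `Oₙ₊₁`, and a
combinatorial argument (`exists_dom`) gives an `mₙ`, depending only on the two codes, such that each
interval of `c Oₙ₊₁` starting after `mₙ` contains two consecutive intervals of `c Oₙ`, with
agreement of the two points there. Consequently `K (c Oₙ) p ⊆ K (c Oₙ₊₁) p` for `p ≥ mₙ`, and for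
any bound `M ≥ mₙ` the right end of the first interval after `M` is strictly larger for `c Oₙ₊₁`
than for `c Oₙ`.

In inning `n + 1` TWO takes for `p` the right end of the first interval of `c Oₙ₊₁` after `mₙ`.
If the `mₙ` are unbounded, the innings at which `mₙ` is a record cover any given point of `⋃ Oₙ`.
If they are bounded with upper limit `M`, then `mₙ = M` infinitely often, and at these innings `p`
tends to infinity by the strict growth of right ends (`exists_covered`).
-/

open Cardinal

universe u v

/-- The `min (n+1) k` most recent moves `[O (n+1-m), …, O n]` of the sequence `O`
of moves of player ONE (innings indexed from `0`). -/
def window {α : Type*} (k : ℕ) (O : ℕ → α) (n : ℕ) : List α :=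
  (List.range (min (n + 1) k)).map fun i => O (n + 1 - min (n + 1) k + i)

/-- TWO has a winning `k`-tactic in the strongly monotonic game `SMG(J)`, where ONE's moves
come from `Jbig` (the σ-completion of `J`) and TWO's from `J`, subject to the rule
`O n ∪ T n ⊆ O (n+1)`; TWO wins when `⋃ O n = ⋃ T n`. -/
def TwoWinsSMG {S : Type*} (J Jbig : Set (Set S)) (k : ℕ) : Prop :=
  ∃ Υ : List (Set S) → Set S,
    (∀ l : List (Set S), l ≠ [] → l.length ≤ k → (∀ A ∈ l, A ∈ Jbig) →
        l.Chain' (· ⊆ ·) → Υ l ∈ J) ∧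
    ∀ O : ℕ → Set S, (∀ n, O n ∈ Jbig) →
      (∀ n, O n ∪ Υ (window k O n) ⊆ O (n + 1)) →
      (⋃ n, O n) = ⋃ n, Υ (window k O n)

/-! ### Nowhere dense sets in the Cantor space -/

/-- Nowhere density in the Cantor space, expressed by cylinders: every cylinder contains a
cylinder disjoint from `T`. -/
def IsND (T : Set (ℕ → Fin 2)) : Prop :=
  ∀ (y : ℕ → Fin 2) (n : ℕ), ∃ (w : ℕ → Fin 2) (m : ℕ),
    (∀ i < n, w i = y i) ∧ ∀ v ∈ T, ∃ i < m, v i ≠ w i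

lemma IsND.union {S T : Set (ℕ → Fin 2)} (hS : IsND S) (hT : IsND T) : IsND (S ∪ T) := by
  intro y n
  obtain ⟨w₁, m₁, h₁, h₁'⟩ := hS y n
  obtain ⟨w₂, m₂, h₂, h₂'⟩ := hT w₁ (max n m₁)
  refine ⟨w₂, max m₁ m₂, fun i hi => ?_, ?_⟩
  · rw [h₂ i (by omega), h₁ i hi]
  · rintro v (hv | hv)
    · obtain ⟨i, hi, hne⟩ := h₁' v hv
      exact ⟨i, by omega, by rwa [h₂ i (by omega)]⟩
    · obtain ⟨i, hi, hne⟩ := h₂' v hv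
      exact ⟨i, by omega, hne⟩

lemma isND_biUnion {F : ℕ → Set (ℕ → Fin 2)} (hF : ∀ k, IsND (F k)) (k : ℕ) :
    IsND {y | ∃ i ≤ k, y ∈ F i} := by
  induction k with
  | zero =>
    convert! hF 0 using 1
    ext y
    simp
  | succ k ih =>
    convert! ih.union (hF (k + 1)) using 1
    ext y
    simp only [Set.mem_ofPred_eq, Set.mem_union]
    constructor
    · rintro ⟨i, hi, hy⟩
      rcases Nat.lt_or_ge k i with h | h
      · obtain rfl : i = k + 1 := by omega
        exact Or.inr hy
      · exact Or.inl ⟨i, h, hy⟩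
    · rintro (⟨i, hi, hy⟩ | hy)
      · exact ⟨i, by omega, hy⟩
      · exact ⟨k + 1, le_rfl, hy⟩

/-- A nowhere dense set can be avoided by one pattern placed on a finite interval `[m, m')`,
independently of the coordinates below `m`: the pattern is extended once for each of the finitely
many initial segments of length `m`. -/
lemma IsND.exists_block {G : Set (ℕ → Fin 2)} (hG : IsND G) (m : ℕ) :
    ∃ (m' : ℕ) (x : ℕ → Fin 2), m < m' ∧ ∀ y ∈ G, ∃ i, m ≤ i ∧ i < m' ∧ y i ≠ x i := by
  have key : ∀ S : Finset (Fin m → Fin 2), ∃ (m' : ℕ) (x : ℕ → Fin 2), m < m' ∧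
      ∀ y ∈ G, (fun j : Fin m => y j) ∈ S → ∃ i, m ≤ i ∧ i < m' ∧ y i ≠ x i := by
    intro S
    induction S using Finset.induction_on with
    | empty => exact ⟨m + 1, 0, by omega, by simp⟩
    | insert s S _ ih =>
      obtain ⟨m', x, hm, hx⟩ := ih
      obtain ⟨w, n, hw, hw'⟩ := hG (fun i => if h : i < m then s ⟨i, h⟩ else x i) m'
      refine ⟨max m' n, w, by omega, fun y hy hyS => ?_⟩
      rcases Finset.mem_insert.1 hyS with h | h
      · obtain ⟨i, hi, hne⟩ := hw' y hy
        refine ⟨i, ?_, by omega, hne⟩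
        by_contra! him
        apply hne
        rw [hw i (by omega), dif_pos him, ← h]
      · obtain ⟨i, h1, h2, h3⟩ := hx y hy h
        refine ⟨i, h1, by omega, ?_⟩
        rw [hw i h2, dif_neg (by omega)]
        exact h3
  obtain ⟨m', x, hm, hx⟩ := key Finset.univ
  exact ⟨m', x, hm, fun y hy => hx y hy (Finset.mem_univ _)⟩

/-! ### Codes of meagre sets -/

/-- A code for a meagre set: a point `x` of the Cantor space together with the consecutive
intervals `[a k, a (k + 1))`. -/
structure Code where
  /-- the pattern to be avoided -/
  x : ℕ → Fin 2
  /-- the left ends of the intervals -/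
  a : ℕ → ℕ
  mono : StrictMono a

namespace Code

/-- The points differing from `x` on every interval that starts at or after `p`. The union over
`p` is the meagre set coded by `c`. -/
def K (c : Code) (p : ℕ) : Set (ℕ → Fin 2) :=
  {y | ∀ k, p ≤ c.a k → ∃ i, c.a k ≤ i ∧ i < c.a (k + 1) ∧ y i ≠ c.x i}

/-- The code obtained by gluing the intervals together in pairs. -/
def double (c : Code) : Code where
  x := c.x
  a k := c.a (2 * k)
  mono := fun i j h => c.mono (by omega)

/-- Every interval of `c'` starting at or after `N` contains an interval of `c` on which the two
patterns agree. -/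
def Dom (c c' : Code) (N : ℕ) : Prop :=
  ∀ k, N ≤ c'.a k → ∃ l, c'.a k ≤ c.a l ∧ c.a (l + 1) ≤ c'.a (k + 1) ∧
    ∀ i, c.a l ≤ i → i < c.a (l + 1) → c'.x i = c.x i

/-- The right end of the first interval of `c` starting at or after `N`. -/
noncomputable def rightEnd (c : Code) (N : ℕ) : ℕ := c.a (sInf {k | N ≤ c.a k} + 1)

lemma K_mono (c : Code) {p q : ℕ} (h : p ≤ q) : c.K p ⊆ c.K q :=
  fun _ hy k hk => hy k (h.trans hk)

lemma K_subset_double (c : Code) (p : ℕ) : c.K p ⊆ c.double.K p := by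
  intro y hy k hk
  obtain ⟨i, h1, h2, h3⟩ := hy (2 * k) hk
  exact ⟨i, h1, h2.trans (c.mono (by omega)), h3⟩

lemma isND_K (c : Code) (p : ℕ) : IsND (c.K p) := by
  intro y n
  refine ⟨fun i => if i < n then y i else c.x i, c.a (max n p + 1), fun i hi => if_pos hi, ?_⟩
  intro v hv
  have h := c.mono.le_apply (x := max n p)
  obtain ⟨i, h1, h2, h3⟩ := hv (max n p) (by omega)
  refine ⟨i, h2, ?_⟩
  simpa only [if_neg (show ¬ i < n by omega)] using h3

lemma exists_le_a (c : Code) (N : ℕ) : N ≤ c.a (sInf {k | N ≤ c.a k}) :=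
  Nat.sInf_mem (s := {k | N ≤ c.a k}) ⟨N, c.mono.le_apply⟩

lemma le_rightEnd (c : Code) (N : ℕ) : N ≤ c.rightEnd N :=
  (c.exists_le_a N).trans (c.mono.monotone (by omega))

lemma rightEnd_mono (c : Code) {M N : ℕ} (h : M ≤ N) : c.rightEnd M ≤ c.rightEnd N := by
  refine c.mono.monotone (Nat.succ_le_succ (Nat.sInf_le ?_))
  exact h.trans (c.exists_le_a N)

lemma Dom.K_subset {c c' : Code} {N p : ℕ} (h : c.double.Dom c' N) (hp : N ≤ p) :
    c.K p ⊆ c'.K p := by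
  intro y hy k hk
  obtain ⟨l, h1, h2, h3⟩ := h k (hp.trans hk)
  obtain ⟨i, h4, h5, h6⟩ := c.K_subset_double p hy l (hk.trans h1)
  refine ⟨i, h1.trans h4, h5.trans_le h2, ?_⟩
  rwa [h3 i h4 h5]

lemma Dom.rightEnd_lt {c c' : Code} {N M : ℕ} (h : c.double.Dom c' N) (hM : N ≤ M) :
    c.rightEnd M < c'.rightEnd M := by
  obtain ⟨l, h1, h2, -⟩ := h _ (hM.trans (c'.exists_le_a M))
  have h3 : sInf {k | M ≤ c.a k} ≤ 2 * l := Nat.sInf_le ((c'.exists_le_a M).trans h1)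
  exact (c.mono (by omega : _ < 2 * (l + 1))).trans_le h2

/-- If a single set `c.K p` is covered by the meagre set coded by `c'`, then `c'` dominates `c`
from some point on. Otherwise there are infinitely many bad intervals of `c'`, which may be chosen
so far apart that no interval of `c` meets two of them; the point following `c'.x` on them and
differing from `c.x` everywhere else lies in `c.K p` but not in the set coded by `c'`. -/
lemma exists_dom {c c' : Code} {p : ℕ} (h : ∀ y ∈ c.K p, ∃ q, y ∈ c'.K q) :
    ∃ N, c.Dom c' N := by
  classical
  by_contra! hcon
  have hbad : ∀ N, ∃ k, N ≤ c'.a k ∧ ∀ l, c'.a k ≤ c.a l → c.a (l + 1) ≤ c'.a (k + 1) →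
      ∃ i, c.a l ≤ i ∧ i < c.a (l + 1) ∧ c'.x i ≠ c.x i := by
    intro N
    have := hcon N
    unfold Dom at this
    push Not at this
    exact this
  choose g hg hg' using hbad
  let κ : ℕ → ℕ := fun s => Nat.rec (g 0) (fun _ k => g (c.a (c'.a (k + 1)))) s
  have hκ : ∀ s, c.a (c'.a (κ s + 1)) ≤ c'.a (κ (s + 1)) := fun s => hg _
  have hκbad : ∀ s l, c'.a (κ s) ≤ c.a l → c.a (l + 1) ≤ c'.a (κ s + 1) →
      ∃ i, c.a l ≤ i ∧ i < c.a (l + 1) ∧ c'.x i ≠ c.x i := by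
    intro s
    cases s with
    | zero => exact hg' _
    | succ s => exact hg' _
  have hκmono : StrictMono κ := by
    refine strictMono_nat_of_lt_succ fun s => ?_
    have h1 := c.mono.le_apply (x := c'.a (κ s + 1))
    have h2 : κ s + 1 ≤ κ (s + 1) := c'.mono.le_iff_le.1 (h1.trans (hκ s))
    omega
  let y : ℕ → Fin 2 := fun i =>
    if ∃ s, c'.a (κ s) ≤ i ∧ i < c'.a (κ s + 1) then c'.x i else c.x i + 1
  have hadd : ∀ t : Fin 2, t + 1 ≠ t := by decide
  have hyK : y ∈ c.K p := by
    intro l _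
    by_contra! hl
    have hin : ∀ i, c.a l ≤ i → i < c.a (l + 1) →
        ∃ s, c'.a (κ s) ≤ i ∧ i < c'.a (κ s + 1) := by
      intro i h1 h2
      by_contra hno
      have := hl i h1 h2
      simp only [y, if_neg hno] at this
      exact hadd _ this
    have hlt : c.a l < c.a (l + 1) := c.mono (by omega)
    obtain ⟨s, hs1, hs2⟩ := hin (c.a l) le_rfl hlt
    obtain ⟨t, ht1, ht2⟩ := hin (c.a (l + 1) - 1) (by omega) (by omega)
    have hst : s = t := by
      rcases lt_trichotomy s t with hst | hst | hst
      · have h1 : l + 1 ≤ c'.a (κ s + 1) := (c.mono.le_apply (x := l)).trans_lt hs2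
        have h2 : c.a (l + 1) ≤ c.a (c'.a (κ s + 1)) := c.mono.monotone h1
        have h3 : c'.a (κ (s + 1)) ≤ c'.a (κ t) :=
          c'.mono.monotone (hκmono.monotone hst)
        have h4 := hκ s
        omega
      · exact hst
      · have h1 : c'.a (κ t + 1) ≤ c'.a (κ s) := c'.mono.monotone (hκmono hst)
        omega
    subst hst
    obtain ⟨i, h1, h2, h3⟩ := hκbad s l hs1 (by omega)
    have h4 := hl i h1 h2
    simp only [y, if_pos (hin i h1 h2)] at h4
    exact h3 h4
  obtain ⟨q, hq⟩ := h y hyK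
  have h1 : q ≤ c'.a (κ q) := hκmono.le_apply.trans c'.mono.le_apply
  obtain ⟨i, h2, h3, h4⟩ := hq (κ q) h1
  apply h4
  simp only [y, if_pos (⟨q, h2, h3⟩ : ∃ s, c'.a (κ s) ≤ i ∧ i < c'.a (κ s + 1))]

/-- Every countable union of nowhere dense sets is covered by a coded meagre set. -/
lemma exists_cover {F : ℕ → Set (ℕ → Fin 2)} (hF : ∀ k, IsND (F k)) :
    ∃ c : Code, ∀ k, ∀ y ∈ F k, ∃ p, y ∈ c.K p := by
  choose M X hM hX using fun k m => (isND_biUnion hF k).exists_block m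
  let a : ℕ → ℕ := fun k => Nat.rec (motive := fun _ => ℕ) 0 (fun k m => M k m) k
  have ha : StrictMono a := strictMono_nat_of_lt_succ fun k => hM k (a k)
  -- `κ i` is the index of the interval containing `i`
  let κ : ℕ → ℕ := fun i => Nat.findGreatest (fun k => a k ≤ i) i
  have hκ : ∀ k i, a k ≤ i → i < a (k + 1) → κ i = k := by
    intro k i h1 h2
    have h3 : k ≤ κ i := Nat.le_findGreatest (P := fun k => a k ≤ i) (ha.le_apply.trans h1) h1
    have h4 : a (κ i) ≤ i :=
      Nat.findGreatest_spec (P := fun k => a k ≤ i) (ha.le_apply.trans h1) h1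
    have h5 : κ i < k + 1 := ha.lt_iff_lt.1 (h4.trans_lt h2)
    omega
  refine ⟨⟨fun i => X (κ i) (a (κ i)) i, a, ha⟩, fun k y hy => ⟨a k, fun l hl => ?_⟩⟩
  obtain ⟨i, h1, h2, h3⟩ := hX l (a l) y ⟨k, ha.le_iff_le.1 hl, hy⟩
  refine ⟨i, h1, h2, ?_⟩
  simp only [hκ l i h1 h2]
  exact h3

/-- The combinatorial core of the game: along a sequence of codes, each dominating the doubling of
its predecessor from `m n` on, the sets `K` cut at the right ends after `m n` cover everything. -/
lemma exists_covered {c : ℕ → Code} {m : ℕ → ℕ} (hm : ∀ n, (c n).double.Dom (c (n + 1)) (m n))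
    {i p : ℕ} {y : ℕ → Fin 2} (hy : y ∈ (c i).K p) :
    ∃ n, y ∈ (c (n + 1)).K ((c (n + 1)).rightEnd (m n)) := by
  have hprop : ∀ q, p ≤ q → ∀ n, i ≤ n → (∀ l < n, m l ≤ q) → y ∈ (c n).K q := by
    intro q hq n hn
    induction n, hn using Nat.le_induction with
    | base => exact fun _ => (c i).K_mono hq hy
    | succ n _ ih =>
      intro hl
      exact (hm n).K_subset (hl n (by omega)) (ih fun l h => hl l (by omega))
  suffices ∃ n, i ≤ n ∧ ∃ q, p ≤ q ∧ (∀ l < n + 1, m l ≤ q) ∧ q ≤ (c (n + 1)).rightEnd (m n) by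
    obtain ⟨n, hn, q, hpq, hq, hle⟩ := this
    exact ⟨n, (c (n + 1)).K_mono hle (hprop q hpq (n + 1) (by omega) hq)⟩
  by_cases hb : ∃ B, ∀ n, m n ≤ B
  · -- `M` is the upper limit of the sequence `m`
    obtain ⟨B, hB⟩ := hb
    have hex : ∃ M N, ∀ n ≥ N, m n ≤ M := ⟨B, 0, fun n _ => hB n⟩
    classical
    obtain ⟨N, hN⟩ := Nat.find_spec hex
    have hfreq : ∀ N', ∃ n ≥ N', Nat.find hex ≤ m n := by
      intro N'
      by_contra! hno
      have hpos := hno N' le_rfl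
      refine Nat.find_min hex (m := Nat.find hex - 1) (by omega) ⟨N', fun n hn => ?_⟩
      have := hno n hn
      omega
    set M := Nat.find hex
    have hgrow : ∀ t, t ≤ (c (N + t)).rightEnd M := by
      intro t
      induction t with
      | zero => exact Nat.zero_le _
      | succ t ih => exact ih.trans_lt ((hm (N + t)).rightEnd_lt (hN _ (by omega)))
    obtain ⟨n, hn, hMn⟩ := hfreq (N + i + p + B)
    refine ⟨n, by omega, p + B, by omega, fun l _ => (hB l).trans (by omega), ?_⟩
    have h1 := hgrow (n + 1 - N)
    rw [show N + (n + 1 - N) = n + 1 by omega] at h1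
    have h2 := (c (n + 1)).rightEnd_mono hMn
    omega
  · push Not at hb
    classical
    have hex : ∃ n, p + ∑ l ∈ Finset.range (i + 1), m l < m n := hb _
    have hspec := Nat.find_spec hex
    have hmin : ∀ l < Nat.find hex, m l ≤ p + ∑ l ∈ Finset.range (i + 1), m l :=
      fun l hl => not_lt.1 (Nat.find_min hex hl)
    set n := Nat.find hex
    refine ⟨n, ?_, m n, by omega, fun l hl => ?_, le_rightEnd _ _⟩
    · by_contra! hni
      have := Finset.single_le_sum (f := m) (fun _ _ => Nat.zero_le _)
        (Finset.mem_range.2 (by omega : n < i + 1))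
      omega
    · rcases Nat.lt_succ_iff_lt_or_eq.1 hl with h | h
      · exact (hmin l h).trans hspec.le
      · rw [h]

end Code

/-! ### Passage between the Cantor space and the real line -/

/-- The real number with integer part `z` and binary digits `y` after the point. -/
noncomputable def phi (z : ℤ) (y : ℕ → Fin 2) : ℝ := z + Real.ofDigits y

lemma phi_surj (r : ℝ) : ∃ z y, phi z y = r := by
  obtain ⟨y, -, hy⟩ := Real.ofDigits_SurjOn (b := 2) (by norm_num)
    (⟨Int.fract_nonneg r, (Int.fract_lt_one r).le⟩ : Int.fract r ∈ Set.Icc (0 : ℝ) 1)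
  exact ⟨⌊r⌋, y, by rw [phi, hy]; exact Int.floor_add_fract r⟩

lemma two_mul_phi (z : ℤ) (y : ℕ → Fin 2) :
    2 * phi z y = phi (2 * z + ((y 0 : ℕ) : ℤ)) (fun i => y (i + 1)) := by
  rw [phi, phi, Real.ofDigits_eq_sum_add_ofDigits y 1]
  simp [Real.ofDigitsTerm]
  ring

lemma phi_sub_le {z : ℤ} {y w : ℕ → Fin 2} {n : ℕ} (h : ∀ i < n, w i = y i) :
    |phi z w - phi z y| ≤ ((2 : ℝ) ^ n)⁻¹ := by
  have := Real.abs_ofDigits_sub_ofDigits_le h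
  simpa [phi] using this

/-- Away from the dyadic rationals of level `n`, the integer part and the first `n` binary digits
are uniquely determined. -/
lemma phi_inj (n : ℕ) : ∀ {z z' : ℤ} {y y' : ℕ → Fin 2}, phi z y = phi z' y' →
    (∀ q : ℤ, 2 ^ n * phi z y ≠ q) → z = z' ∧ ∀ i < n, y i = y' i := by
  induction n with
  | zero =>
    intro z z' y y' h hq
    refine ⟨?_, by simp⟩
    have hlt : ∀ (z : ℤ) (y : ℕ → Fin 2), (∀ q : ℤ, phi z y ≠ q) → ⌊phi z y⌋ = z := by
      intro z y hq
      rw [Int.floor_eq_iff]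
      have h0 := Real.ofDigits_nonneg y
      have h1 := Real.ofDigits_le_one y
      refine ⟨by rw [phi]; linarith, lt_of_le_of_ne (by rw [phi]; linarith) ?_⟩
      exact_mod_cast hq (z + 1)
    simp only [pow_zero, one_mul] at hq
    rw [← hlt z y hq, ← hlt z' y' (h ▸ hq), h]
  | succ n ih =>
    intro z z' y y' h hq
    have h2 : phi (2 * z + ((y 0 : ℕ) : ℤ)) (fun i => y (i + 1)) =
        phi (2 * z' + ((y' 0 : ℕ) : ℤ)) (fun i => y' (i + 1)) := by
      rw [← two_mul_phi, ← two_mul_phi, h]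
    obtain ⟨h3, h4⟩ := ih h2 (by
      intro q
      rw [← two_mul_phi, ← mul_assoc, ← pow_succ]
      exact hq q)
    have hy := (y 0).isLt
    have hy' := (y' 0).isLt
    refine ⟨by omega, fun i hi => ?_⟩
    cases i with
    | zero => exact Fin.ext (by omega)
    | succ i => exact h4 i (by omega)

/-- The image under `phi z` of the cylinder of length `n` around `y` contains the dyadic interval
`[q / 2 ^ n, (q + 1) / 2 ^ n]`. -/
lemma exists_dyadic (n : ℕ) : ∀ (z : ℤ) (y : ℕ → Fin 2), ∃ q : ℤ, ∀ u : ℕ → Fin 2,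
    ∃ w : ℕ → Fin 2, (∀ i < n, w i = y i) ∧ 2 ^ n * phi z w = phi q u := by
  induction n with
  | zero => exact fun z y => ⟨z, fun u => ⟨u, by simp, by simp⟩⟩
  | succ n ih =>
    intro z y
    obtain ⟨q, hq⟩ := ih (2 * z + ((y 0 : ℕ) : ℤ)) (fun i => y (i + 1))
    refine ⟨q, fun u => ?_⟩
    obtain ⟨w, hw, hw'⟩ := hq u
    refine ⟨fun i => Nat.casesOn i (y 0) w, fun i hi => ?_, ?_⟩
    · cases i with
      | zero => rfl
      | succ i => exact hw i (by omega)
    · rw [pow_succ, mul_assoc, two_mul_phi, ← hw']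
      rfl

/-- The image of a cylinder contains a nonempty open set whose points have no expansion outside
that cylinder. -/
lemma exists_open (z : ℤ) (y : ℕ → Fin 2) (n : ℕ) : ∃ W : Set ℝ, IsOpen W ∧ W.Nonempty ∧
    (∀ r ∈ W, ∃ w, (∀ i < n, w i = y i) ∧ phi z w = r) ∧
    ∀ z' v, phi z' v ∈ W → ∀ i < n, v i = y i := by
  obtain ⟨q, hq⟩ := exists_dyadic n z y
  have hpos : (0 : ℝ) < 2 ^ n := by positivity
  have hW : ∀ r : ℝ, (q : ℝ) < 2 ^ n * r → 2 ^ n * r < q + 1 →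
      ∃ w, (∀ i < n, w i = y i) ∧ phi z w = r := by
    intro r h1 h2
    obtain ⟨u, -, hu⟩ := Real.ofDigits_SurjOn (b := 2) (by norm_num)
      (⟨by linarith, by linarith⟩ : 2 ^ n * r - q ∈ Set.Icc (0 : ℝ) 1)
    obtain ⟨w, hw, hw'⟩ := hq u
    refine ⟨w, hw, mul_left_cancel₀ hpos.ne' ?_⟩
    rw [hw', phi, hu]
    ring
  refine ⟨(fun r => 2 ^ n * r) ⁻¹' Set.Ioo (q : ℝ) (q + 1), isOpen_Ioo.preimage (by fun_prop),
    ⟨(q + 1 / 2) / 2 ^ n, ?_⟩, fun r hr => hW r hr.1 hr.2, ?_⟩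
  · have : (2 : ℝ) ^ n * ((q + 1 / 2) / 2 ^ n) = q + 1 / 2 := by field_simp
    simp only [Set.mem_preimage, this]
    constructor <;> linarith
  · intro z' v hv i hi
    obtain ⟨w, hw, hw'⟩ := hW _ hv.1 hv.2
    have hne : ∀ t : ℤ, 2 ^ n * phi z' v ≠ t := by
      intro t ht
      have h1 := hv.1
      have h2 := hv.2
      simp only [ht] at h1 h2
      norm_cast at h1 h2
      omega
    rw [(phi_inj n hw'.symm hne).2 i hi, hw i hi]

/-- The open set `U` contains the image of a sufficiently small cylinder around each of its
points. -/
lemma exists_cylinder_subset {U : Set ℝ} (hU : IsOpen U) {z : ℤ} {y : ℕ → Fin 2}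
    (h : phi z y ∈ U) : ∃ n, ∀ w : ℕ → Fin 2, (∀ i < n, w i = y i) → phi z w ∈ U := by
  obtain ⟨ε, hε, hball⟩ := Metric.isOpen_iff.1 hU _ h
  obtain ⟨n, hn⟩ := exists_pow_lt_of_lt_one hε (by norm_num : (1 / 2 : ℝ) < 1)
  refine ⟨n, fun w hw => hball ?_⟩
  rw [Metric.mem_ball, Real.dist_eq]
  refine (phi_sub_le hw).trans_lt ?_
  simpa using hn

lemma isND_preimage {N : Set ℝ} (hN : IsNowhereDense N) (z : ℤ) : IsND (phi z ⁻¹' N) := by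
  intro y n
  obtain ⟨W, hWo, hWne, hW, -⟩ := exists_open z y n
  have hnot : ¬ W ⊆ closure N := by
    intro hsub
    have := interior_maximal hsub hWo
    rw [hN] at this
    exact hWne.ne_empty (Set.subset_empty_iff.1 this)
  obtain ⟨r, hrW, hr⟩ := Set.not_subset.1 hnot
  obtain ⟨w, hw, rfl⟩ := hW r hrW
  obtain ⟨m, hm⟩ := exists_cylinder_subset isClosed_closure.isOpen_compl hr
  refine ⟨w, m, hw, fun v hv => ?_⟩
  by_contra! hcon
  exact hm v hcon (subset_closure hv)

lemma isNowhereDense_image {T : Set (ℕ → Fin 2)} (hT : IsND T) :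
    IsNowhereDense {r : ℝ | ∃ z, ∃ y ∈ T, phi z y = r} := by
  rw [IsNowhereDense, Set.eq_empty_iff_forall_notMem]
  intro r hr
  obtain ⟨z, y, rfl⟩ := phi_surj r
  obtain ⟨n, hn⟩ := exists_cylinder_subset isOpen_interior hr
  obtain ⟨w, m, hw, hm⟩ := hT y n
  obtain ⟨W, hWo, ⟨s, hs⟩, hW, hW'⟩ := exists_open z w (max n m)
  have hsub : s ∈ closure {r : ℝ | ∃ z, ∃ y ∈ T, phi z y = r} := by
    obtain ⟨w', hw', rfl⟩ := hW s hs
    exact interior_subset (hn w' fun i hi => (hw' i (by omega)).trans (hw i hi))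
  obtain ⟨_, htW, z', v, hv, rfl⟩ := mem_closure_iff.1 hsub W hWo hs
  obtain ⟨i, hi, hne⟩ := hm v hv
  exact hne (hW' z' v htW i (by omega))

/-- Every meagre set of reals is covered by the image of a coded meagre set. -/
lemma exists_code (A : Set ℝ) : ∃ c : Code, IsMeagre A → ∀ z y, phi z y ∈ A → ∃ p, y ∈ c.K p := by
  by_cases hA : IsMeagre A
  · obtain ⟨S, hS, hSc, hAS⟩ := isMeagre_iff_countable_union_isNowhereDense.1 hA
    have hS' : ∀ t ∈ insert ∅ S, IsNowhereDense t := by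
      rintro t (rfl | ht)
      · exact isNowhereDense_empty
      · exact hS t ht
    obtain ⟨f, hf⟩ := (hSc.insert ∅).exists_eq_range (Set.insert_nonempty _ _)
    obtain ⟨e, he⟩ := exists_surjective_nat (ℤ × ℕ)
    obtain ⟨c, hc⟩ := Code.exists_cover (F := fun k => phi (e k).1 ⁻¹' f (e k).2)
      (fun k => isND_preimage (hS' _ (hf ▸ Set.mem_range_self _)) _)
    refine ⟨c, fun _ z y hy => ?_⟩
    obtain ⟨t, ht, hyt⟩ := hAS hy
    obtain ⟨j, rfl⟩ : t ∈ Set.range f := hf ▸ Set.mem_insert_of_mem _ ht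
    obtain ⟨k, hk⟩ := he (z, j)
    exact hc k y (by simpa [hk] using hyt)
  · exact ⟨⟨0, id, strictMono_id⟩, fun h => absurd h hA⟩

/-! ### The tactic -/

/-- The nowhere dense set of reals that TWO plays for the code `c` and the cut `p`. -/
def answer (c : Code) (p : ℕ) : Set ℝ := {r | ∃ z, ∃ y ∈ c.double.K p, phi z y = r}

/-- The tactic of TWO, given an assignment of codes to the moves of ONE. The infimum is the least
index from which the code of the second move dominates the doubled code of the first. -/
noncomputable def reply (code : Set ℝ → Code) : List (Set ℝ) → Set ℝ
  | [A] => answer (code A) 0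
  | [A, B] => answer (code B)
      ((code B).rightEnd (sInf {N | (code A).double.Dom (code B) N}))
  | _ => ∅

/-- Corollary 4.12: player TWO has a winning 2-tactic in the strongly monotonic game
`SMG(J_ℝ)`, where ONE plays meager subsets of `ℝ` and TWO plays nowhere dense sets. -/
theorem stmt16 :
    TwoWinsSMG {A : Set ℝ | IsNowhereDense A} {A : Set ℝ | IsMeagre A} 2 := by
  choose code hcode using exists_code
  have hans : ∀ c p, IsNowhereDense (answer c p) :=
    fun c p => isNowhereDense_image (c.double.isND_K p)
  refine ⟨reply code, fun l _ _ _ _ => ?_, fun O hO hrule => ?_⟩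
  · change IsNowhereDense _
    unfold reply
    split
    · exact hans _ _
    · exact hans _ _
    · exact isNowhereDense_empty
  · have hw0 : window 2 O 0 = [O 0] := by simp [window]
    have hw : ∀ n, window 2 O (n + 1) = [O n, O (n + 1)] := by
      intro n
      simp [window, List.range_succ]
    have hform : ∀ n, ∃ p, reply code (window 2 O n) = answer (code (O n)) p := by
      intro n
      cases n with
      | zero => exact ⟨0, by rw [hw0]; rfl⟩
      | succ n => exact ⟨_, by rw [hw]; rfl⟩
    have hdom : ∀ n, (code (O n)).double.Dom (code (O (n + 1)))
        (sInf {N | (code (O n)).double.Dom (code (O (n + 1))) N}) := by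
      intro n
      refine Nat.sInf_mem (s := {N | (code (O n)).double.Dom (code (O (n + 1))) N}) ?_
      obtain ⟨p, hp⟩ := hform n
      refine Code.exists_dom (p := p) fun y hy => hcode _ (hO (n + 1)) 0 y (hrule n (Or.inr ?_))
      rw [hp]
      exact ⟨0, y, hy, rfl⟩
    apply Set.Subset.antisymm
    · refine Set.iUnion_subset fun i r hr => ?_
      obtain ⟨z, y, rfl⟩ := phi_surj r
      obtain ⟨p, hp⟩ := hcode _ (hO i) z y hr
      obtain ⟨n, hn⟩ := Code.exists_covered (c := fun n => code (O n)) hdom hp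
      refine Set.mem_iUnion.2 ⟨n + 1, ?_⟩
      rw [hw]
      exact ⟨z, y, Code.K_subset_double _ _ hn, rfl⟩
    · exact Set.iUnion_subset fun n =>
        (Set.subset_union_right.trans (hrule n)).trans (Set.subset_iUnion O (n + 1))
end

section
/- Let k be a positive integer and let (X,τ) be a topological space. If player TWO has a winning Markov k-tactic in the Banach-Mazur game BM(X,τ), then TWO has a winning k-tactic in BM(X,τ). -/
/-!
Everything happens in the partially ordered set `P` of nonempty open sets. Call a set of elements
of `P` *dense below* `u` if it is a lower set meeting every cone `{w | w ≤ v}` with `v ≤ u`.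

**Clock lemma** (`exists_clock`). Suppose that, in inning `m`, TWO is given a sequence `E m n`
(`n ∈ ℕ`) of sets dense below ONE's move `O m`. Then TWO can answer knowing only `E m` and `O m` so
that, for some `m₀`, `O (m₀ + n + 1) ∈ E (m₀ + n) n` for all `n`. Call `u` *clocked* if countably
many sets dense below `u` have no common element below `u`. If `O m` is not clocked, TWO enters all
the `E m n` at once. If `u` is clocked by `D`, the least `n` with `v ∉ D n` is a rank which TWO can
make strictly increase by entering `D i` (and `E m i`) for all `i` up to the current rank. Choosing
for `O m` the first clocked element above it, in a fixed well-ordering of `P`, the witness `D` is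
eventually constant along each play.

For `k = 1`, apply the clock lemma to the sets `{v | ∃ w ≤ u, v ≤ τ n [w]}`: the witnesses `w` form
a play against the Markov tactic `τ`, refining the given play.

For `k ≥ 2`, call `u` *directed below* if any two elements below `u` have a common lower bound. Once
`O m` is directed below, the cones `{v | v ≤ τ n (last n + 1 moves)}` are dense below `O m`, and the
clock lemma makes a tail of the play a play against `τ`. If no element below `O 0` is directed below,
then each `u ≤ O 0` has an infinite antichain `p u 0, p u 1, …` below it. In inning `n` TWO pretends
that ONE played `p (O n) n` and answers with `τ n`; then the inning number is read off from
the last two moves of ONE, as `O (n + 1) ≤ p (O n) n` for exactly one index.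
-/

open Cardinal

universe u v

/-- A legal `k`-tactic for TWO in the Banach-Mazur game: to every nonempty `⊇`-decreasing
tuple of at most `k` nonempty open sets it assigns a nonempty open subset of the last
set of the tuple. -/
def GoodBMTactic {X : Type*} [TopologicalSpace X] (k : ℕ) (Υ : List (Set X) → Set X) : Prop :=
  ∀ l : List (Set X), l ≠ [] → l.length ≤ k →
    (∀ V ∈ l, IsOpen V ∧ V.Nonempty) → l.Chain' (· ⊇ ·) →
    IsOpen (Υ l) ∧ (Υ l).Nonempty ∧ ∀ U : Set X, l.getLast? = some U → Υ l ⊆ U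

namespace BanachMazur

/-! ### The clock lemma -/

section Clock

variable {P : Type u} [PartialOrder P]

/-- `D` is a lower set and every element below `u` has an element of `D` below it. -/
def DenseBelow (D : Set P) (u : P) : Prop :=
  IsLowerSet D ∧ ∀ v ≤ u, ∃ w ∈ D, w ≤ v

/-- The sequence `D` of sets dense below `u` has no common element below `u`. -/
def Clocks (D : ℕ → Set P) (u : P) : Prop :=
  (∀ n, DenseBelow (D n) u) ∧ ∀ v ≤ u, ∃ n, v ∉ D n

theorem DenseBelow.mono {D : Set P} {u v : P} (h : DenseBelow D u) (hv : v ≤ u) :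
    DenseBelow D v :=
  ⟨h.1, fun w hw => h.2 w (hw.trans hv)⟩

theorem DenseBelow.inter {D E : Set P} {u : P} (hD : DenseBelow D u) (hE : DenseBelow E u) :
    DenseBelow (D ∩ E) u := by
  refine ⟨hD.1.inter hE.1, fun v hv => ?_⟩
  obtain ⟨w, hw, hwv⟩ := hD.2 v hv
  obtain ⟨z, hz, hzw⟩ := hE.2 w (hwv.trans hv)
  exact ⟨z, ⟨hD.1 hzw hw, hz⟩, hzw.trans hwv⟩

theorem exists_mem_of_le {D : ℕ → Set P} {u : P} (hD : ∀ n, DenseBelow (D n) u) (r : ℕ) :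
    ∃ s ≤ u, ∀ i ≤ r, s ∈ D i := by
  induction r with
  | zero =>
    obtain ⟨w, hw, hwu⟩ := (hD 0).2 u le_rfl
    exact ⟨w, hwu, fun i hi => by rwa [Nat.le_zero.1 hi]⟩
  | succ r ih =>
    obtain ⟨s, hs, h⟩ := ih
    obtain ⟨w, hw, hws⟩ := (hD (r + 1)).2 s hs
    refine ⟨w, hws.trans hs, fun i hi => ?_⟩
    rcases Nat.le_succ_iff.1 hi with hi | rfl
    · exact (hD i).1 hws (h i hi)
    · exact hw

/-- A choice of clocks `D u` for the elements that have one, such that along every descending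
sequence starting at a clocked element the chosen clock is eventually constant. -/
theorem exists_stable_clocks :
    ∃ D : P → ℕ → Set P, (∀ u, (∃ D', Clocks D' u) → Clocks (D u) u) ∧
      ∀ O : ℕ → P, Antitone O → (∃ D', Clocks D' (O 0)) →
        ∃ m, ∀ n, D (O (m + n)) = D (O m) := by
  classical
  -- `base u` is the first clocked element above `u`, in the well-ordering of `P` pulled back
  -- from the cardinals.
  have hbase : ∀ u : P, ∃ b : P, (∃ D', Clocks D' u) → u ≤ b ∧ (∃ D', Clocks D' b) ∧
      ∀ c, u ≤ c → (∃ D', Clocks D' c) → embeddingToCardinal b ≤ embeddingToCardinal c := by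
    intro u
    by_cases hu : ∃ D', Clocks D' u
    · obtain ⟨b, hb, hmin⟩ := (InvImage.wf (fun b : P => embeddingToCardinal b)
        Cardinal.lt_wf).has_min {b | u ≤ b ∧ ∃ D', Clocks D' b} ⟨u, le_rfl, hu⟩
      exact ⟨b, fun _ => ⟨hb.1, hb.2, fun c hc hc' => not_lt.1 (hmin c ⟨hc, hc'⟩)⟩⟩
    · exact ⟨u, fun h => absurd h hu⟩
  choose base hbase using hbase
  have hD : ∀ b : P, ∃ D : ℕ → Set P, (∃ D', Clocks D' b) → Clocks D b := by
    intro b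
    by_cases hb : ∃ D', Clocks D' b
    · exact ⟨hb.choose, fun _ => hb.choose_spec⟩
    · exact ⟨fun _ => ∅, fun h => absurd h hb⟩
  choose D hD using hD
  have hdown : ∀ {D' : ℕ → Set P} {u v : P}, Clocks D' u → v ≤ u → Clocks D' v :=
    fun h hv => ⟨fun n => (h.1 n).mono hv, fun w hw => h.2 w (hw.trans hv)⟩
  refine ⟨fun u => D (base u), fun u hu => hdown (hD _ (hbase u hu).2.1) (hbase u hu).1, ?_⟩
  rintro O hO ⟨D₀, hD₀⟩
  have hcl : ∀ n, ∃ D', Clocks D' (O n) := fun n => ⟨D₀, hdown hD₀ (hO (Nat.zero_le n))⟩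
  obtain ⟨m, -, hm⟩ := (InvImage.wf (fun n => embeddingToCardinal (base (O n)))
    Cardinal.lt_wf).has_min Set.univ ⟨0, trivial⟩
  refine ⟨m, fun n => congrArg D (embeddingToCardinal.injective (le_antisymm ?_ ?_))⟩
  · exact (hbase _ (hcl (m + n))).2.2 _
      ((hO (Nat.le_add_right m n)).trans (hbase _ (hcl m)).1) (hbase _ (hcl m)).2.1
  · exact not_lt.1 (hm (m + n) trivial)

/-- A response `S`, depending only on the current move of ONE and on the dense sets given in the
current inning, which forces that from some inning `m` on, ONE's move after inning `m + n` lies in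
the `n`-th dense set given in inning `m + n`. The inning `m` may depend on the play. -/
theorem exists_clock :
    ∃ S : (ℕ → Set P) → P → P, (∀ E u, S E u ≤ u) ∧
      ∀ (E : ℕ → ℕ → Set P) (O : ℕ → P), (∀ m n, DenseBelow (E m n) (O m)) →
        (∀ m, O (m + 1) ≤ S (E m) (O m)) → ∃ m, ∀ n, O (m + n + 1) ∈ E (m + n) n := by
  classical
  obtain ⟨D, hD, hstable⟩ := exists_stable_clocks (P := P)
  -- the rank of `v` with respect to the clock `D'` is the least `n` with `v ∉ D' n`
  let r : (ℕ → Set P) → P → ℕ := fun D' v => sInf {n | v ∉ D' n}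
  have hS : ∀ (E : ℕ → Set P) (u : P), ∃ s ≤ u, (∀ n, DenseBelow (E n) u) →
      ((∃ D', Clocks D' u) → ∀ i ≤ r (D u) u, s ∈ D u i ∩ E i) ∧
      ((¬ ∃ D', Clocks D' u) → ∀ n, s ∈ E n) := by
    intro E u
    by_cases hE : ∀ n, DenseBelow (E n) u
    · by_cases hu : ∃ D', Clocks D' u
      · obtain ⟨s, hs, h⟩ := exists_mem_of_le
          (fun n => ((hD u hu).1 n).inter (hE n)) (r (D u) u)
        exact ⟨s, hs, fun _ => ⟨fun _ => h, fun h' => absurd hu h'⟩⟩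
      · have : ∃ s ≤ u, ∀ n, s ∈ E n := by
          by_contra! hcon
          exact hu ⟨E, hE, hcon⟩
        obtain ⟨s, hs, h⟩ := this
        exact ⟨s, hs, fun _ => ⟨fun h' => absurd h' hu, fun _ => h⟩⟩
    · exact ⟨u, le_rfl, fun h => absurd h hE⟩
  choose S hSle hS using hS
  refine ⟨S, hSle, fun E O hE hO => ?_⟩
  have hanti : Antitone O := antitone_nat_of_succ_le fun m => (hO m).trans (hSle _ _)
  by_cases hcl : ∃ m, ∃ D', Clocks D' (O m)
  · obtain ⟨m₁, D₁, hD₁⟩ := hcl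
    have hcl : ∀ n, ∃ D', Clocks D' (O (m₁ + n)) := fun n =>
      ⟨D₁, fun i => (hD₁.1 i).mono (hanti (Nat.le_add_right _ _)),
        fun w hw => hD₁.2 w (hw.trans (hanti (Nat.le_add_right _ _)))⟩
    obtain ⟨m₂, hm₂⟩ := hstable (fun n => O (m₁ + n)) (fun a b hab => hanti (by omega)) (hcl 0)
    set m := m₁ + m₂ with hm
    have hcl' : ∀ n, ∃ D', Clocks D' (O (m + n)) := fun n => by
      simpa [hm, add_assoc] using hcl (m₂ + n)
    have hDm : ∀ n, D (O (m + n)) = D (O m) := fun n => by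
      simpa [hm, add_assoc] using hm₂ n
    have hstep : ∀ n, ∀ i ≤ r (D (O m)) (O (m + n)),
        O (m + n + 1) ∈ D (O m) i ∩ E (m + n) i := by
      intro n i hi
      have h := (hS (E (m + n)) (O (m + n)) (hE _)).1 (hcl' n) i (by rwa [hDm])
      rw [hDm] at h
      have hl : IsLowerSet (D (O m) i) := by
        have := ((hD _ (hcl' n)).1 i).1
        rwa [hDm] at this
      exact ⟨hl (hO _) h.1, (hE _ i).1 (hO _) h.2⟩
    have hrank : ∀ n, n ≤ r (D (O m)) (O (m + n)) := by
      intro n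
      induction n with
      | zero => exact Nat.zero_le _
      | succ n ih =>
        by_contra! hlt
        have hne : {i | O (m + n + 1) ∉ D (O m) i}.Nonempty := by
          have := (hD _ (hcl' (n + 1))).2 _ le_rfl
          rwa [hDm] at this
        have hnot : O (m + n + 1) ∉ D (O m) (r (D (O m)) (O (m + n + 1))) := Nat.sInf_mem hne
        have hlt' : r (D (O m)) (O (m + n + 1)) < n + 1 := hlt
        exact hnot (hstep n _ (by omega)).1
    exact ⟨m, fun n => (hstep n n (hrank n)).2⟩
  · push Not at hcl
    refine ⟨0, fun n => (hE _ n).1 (hO _) ((hS _ _ (hE _)).2 ?_ n)⟩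
    rintro ⟨D', h⟩
    exact hcl _ D' h

end Clock

/-! ### Windows of moves -/

section Window

variable {P : Type u}

theorem window_length (k : ℕ) (O : ℕ → P) (n : ℕ) : (window k O n).length = min (n + 1) k := by
  simp [window]

theorem window_getElem (k : ℕ) (O : ℕ → P) (n i : ℕ) (h : i < (window k O n).length) :
    (window k O n)[i] = O (n + 1 - min (n + 1) k + i) := by
  simp [window]

theorem window_getLast? {k : ℕ} (hk : 1 ≤ k) (O : ℕ → P) (n : ℕ) :
    (window k O n).getLast? = some (O n) := by
  have hl := window_length k O n
  rw [List.getLast?_eq_getElem?, List.getElem?_eq_getElem (by omega), window_getElem, hl]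
  congr 2
  omega

theorem window_map {Q : Type v} (f : P → Q) (k : ℕ) (O : ℕ → P) (n : ℕ) :
    window k (fun i => f (O i)) n = (window k O n).map f := by
  simp [window]

theorem window_shift (k : ℕ) (O : ℕ → P) (m n : ℕ) :
    window k (fun i => O (m + i)) n =
      (window k O (m + n)).drop ((window k O (m + n)).length - (n + 1)) := by
  apply List.ext_getElem
  · simp only [List.length_drop, window_length]
    omega
  · intro i h₁ h₂
    rw [List.getElem_drop, window_getElem, window_getElem, window_length]
    rw [window_length] at h₁
    congr 1
    omega

theorem window_mapIdx (f : P → ℕ → P) (k : ℕ) (O : ℕ → P) (n : ℕ) :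
    (window k O n).mapIdx (fun i x => f x (n + 1 - (window k O n).length + i)) =
      window k (fun j => f (O j) j) n := by
  apply List.ext_getElem
  · simp [window_length]
  · intro i h₁ h₂
    rw [List.getElem_mapIdx, window_getElem, window_getElem, window_length]

end Window

/-! ### Antichains below elements that are nowhere directed -/

section Pieces

variable {P : Type u} [PartialOrder P]

/-- Any two elements below `u` have a common lower bound; for open sets: `u` is irreducible. -/
def DirectedBelow (u : P) : Prop :=
  ∀ v ≤ u, ∀ w ≤ u, ∃ z, z ≤ v ∧ z ≤ w

theorem DirectedBelow.mono {u v : P} (h : DirectedBelow u) (hv : v ≤ u) : DirectedBelow v :=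
  fun a ha b hb => h a (ha.trans hv) b (hb.trans hv)

theorem exists_pieces (u : P) : ∃ p : ℕ → P, (∀ n, p n ≤ u) ∧
    ((∀ h ≤ u, ¬ DirectedBelow h) → ∀ z i j, z ≤ p i → z ≤ p j → i = j) := by
  classical
  have hsplit : ∀ h : P, ∃ a b : P, a ≤ h ∧ b ≤ h ∧
      (¬ DirectedBelow h → ∀ z, z ≤ a → ¬ z ≤ b) := by
    intro h
    by_cases hh : DirectedBelow h
    · exact ⟨h, h, le_rfl, le_rfl, fun h' => absurd hh h'⟩
    · unfold DirectedBelow at hh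
      push Not at hh
      obtain ⟨a, ha, b, hb, hab⟩ := hh
      exact ⟨a, b, ha, hb, fun _ => hab⟩
  choose a b ha hb hab using hsplit
  -- split off `a` and keep splitting the remainder `b`
  let rest : ℕ → P := fun n => b^[n] u
  have hrest : ∀ n, rest (n + 1) = b (rest n) := fun n => Function.iterate_succ_apply' b n u
  have hanti : Antitone rest := antitone_nat_of_succ_le fun n => by rw [hrest]; exact hb _
  have hle : ∀ n, rest n ≤ u := fun n => hanti (Nat.zero_le n)
  refine ⟨fun n => a (rest n), fun n => (ha _).trans (hle n), fun hu z i j hi hj => ?_⟩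
  have key : ∀ i j, i < j → z ≤ a (rest i) → ¬ z ≤ a (rest j) := by
    intro i j hij hi hj
    refine hab _ (hu _ (hle i)) z hi ?_
    rw [← hrest]
    exact (hj.trans (ha _)).trans (hanti hij)
  rcases lt_trichotomy i j with h | h | h
  · exact absurd hj (key i j h hi)
  · exact h
  · exact absurd hi (key j i h hj)

end Pieces

/-! ### From Markov tactics to tactics in a partial order -/

section Game

variable {P : Type u} [PartialOrder P]

theorem tactic_of_markov_one [Nonempty P] (Win : (ℕ → P) → Prop)
    (hmono : ∀ W O : ℕ → P, Win W → (∀ n, ∃ m, W m ≤ O n) → Win O)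
    (τ : ℕ → List P → P) (hτ : ∀ n l, ∀ u ∈ l.getLast?, τ n l ≤ u)
    (hwin : ∀ W : ℕ → P, (∀ n, W (n + 1) ≤ τ n (window 1 W n)) → Win W) :
    ∃ σ : List P → P, (∀ l, ∀ u ∈ l.getLast?, σ l ≤ u) ∧
      ∀ O : ℕ → P, (∀ n, O (n + 1) ≤ σ (window 1 O n)) → Win O := by
  classical
  obtain ⟨S, hSle, hS⟩ := exists_clock (P := P)
  let E : P → ℕ → Set P := fun u n => {v | ∃ w ≤ u, v ≤ τ n [w]}
  have hE : ∀ u n, DenseBelow (E u n) u := by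
    refine fun u n => ⟨fun a b hba ⟨w, hw, haw⟩ => ⟨w, hw, hba.trans haw⟩, fun v hv => ?_⟩
    exact ⟨τ n [v], ⟨v, hv, le_rfl⟩, hτ n [v] v (by simp)⟩
  have hσ : ∀ l : List P, ∃ s : P, ∀ u ∈ l.getLast?, s = S (E u) u := by
    intro l
    cases h : l.getLast? with
    | none => exact ⟨Classical.arbitrary P, by simp⟩
    | some u => exact ⟨S (E u) u, by simp⟩
  choose σ hσ using hσ
  refine ⟨σ, fun l u hu => hσ l u hu ▸ hSle _ _, fun O hO => ?_⟩
  have hO' : ∀ n, O (n + 1) ≤ S (E (O n)) (O n) := fun n =>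
    hσ _ _ (window_getLast? le_rfl O n) ▸ hO n
  have hanti : Antitone O := antitone_nat_of_succ_le fun m => (hO' m).trans (hSle _ _)
  obtain ⟨m, hm⟩ := hS (fun m => E (O m)) O (fun m => hE (O m)) hO'
  choose W hW hOW using hm
  have hwindow : ∀ n, window 1 W n = [W n] := fun n => by simp [window]
  refine hmono W O (hwin W fun n => ?_) fun n => ⟨n, (hW n).trans (hanti (by omega))⟩
  rw [hwindow]
  exact (hW (n + 1)).trans (hOW n)

theorem tactic_of_markov_of_two_le [Nonempty P] (k : ℕ) (hk : 2 ≤ k) (Win : (ℕ → P) → Prop)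
    (hmono : ∀ W O : ℕ → P, Win W → (∀ n, ∃ m, W m ≤ O n) → Win O)
    (τ : ℕ → List P → P) (hτ : ∀ n l, ∀ u ∈ l.getLast?, τ n l ≤ u)
    (hwin : ∀ W : ℕ → P, (∀ n, W (n + 1) ≤ τ n (window k W n)) → Win W) :
    ∃ σ : List P → P, (∀ l, ∀ u ∈ l.getLast?, σ l ≤ u) ∧
      ∀ O : ℕ → P, (∀ n, O (n + 1) ≤ σ (window k O n)) → Win O := by
  classical
  have hk1 : 1 ≤ k := by omega
  obtain ⟨S, hSle, hS⟩ := exists_clock (P := P)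
  choose p hple hp using exists_pieces (P := P)
  let E : List P → ℕ → Set P := fun l n => {v | v ≤ τ n (l.drop (l.length - (n + 1)))}
  -- the inning number read off from the last two moves; a single move means inning `0`
  let N : List P → ℕ := fun l => if l.length = 1 then 0 else
    sInf {j | ∃ u v, l[l.length - 2]? = some u ∧ l.getLast? = some v ∧ v ≤ p u j} + 1
  let M : List P → List P := fun l => l.mapIdx fun i x => p x (N l + 1 - l.length + i)
  have hM : ∀ l, ∀ u ∈ l.getLast?, τ (N l) (M l) ≤ u := by
    intro l u hu
    obtain ⟨i, hi⟩ : ∃ i, (M l).getLast? = some (p u i) := by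
      rw [Option.mem_def, List.getLast?_eq_getElem?] at hu
      simp [M, List.getLast?_eq_getElem?, hu]
    exact (hτ _ _ _ hi).trans (hple u i)
  have hσ : ∀ l : List P, ∃ s : P, ∀ u ∈ l.getLast?, s ≤ u ∧
      (DirectedBelow u → s = S (E l) u) ∧
      (¬ DirectedBelow u → (∃ h ≤ u, DirectedBelow h) → DirectedBelow s) ∧
      ((∀ h ≤ u, ¬ DirectedBelow h) → s = τ (N l) (M l)) := by
    intro l
    cases h : l.getLast? with
    | none => exact ⟨Classical.arbitrary P, by simp⟩
    | some u =>
      by_cases h₁ : DirectedBelow u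
      · exact ⟨S (E l) u, by
          rintro _ ⟨⟩
          exact ⟨hSle _ _, fun _ => rfl, fun h => absurd h₁ h, fun h => absurd h₁ (h u le_rfl)⟩⟩
      by_cases h₂ : ∃ h ≤ u, DirectedBelow h
      · obtain ⟨s, hs, hs'⟩ := h₂
        exact ⟨s, by
          rintro _ ⟨⟩
          exact ⟨hs, fun h => absurd h h₁, fun _ _ => hs', fun h => absurd hs' (h s hs)⟩⟩
      · exact ⟨τ (N l) (M l), by
          rintro _ ⟨⟩
          exact ⟨hM l u h, fun h => absurd h h₁, fun _ h => absurd h h₂, fun _ => rfl⟩⟩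
  choose σ hσ using hσ
  refine ⟨σ, fun l u hu => (hσ l u hu).1, fun O hO => ?_⟩
  have hlast := window_getLast? hk1 O
  have hanti : Antitone O :=
    antitone_nat_of_succ_le fun n => (hO n).trans (hσ _ _ (hlast n)).1
  by_cases hdir : ∃ m, DirectedBelow (O m)
  · obtain ⟨m, hm⟩ := hdir
    have hdir : ∀ n, DirectedBelow (O (m + n)) := fun n => hm.mono (hanti (by omega))
    have hE : ∀ n j, DenseBelow (E (window k O (m + n)) j) (O (m + n)) := by
      refine fun n j => ⟨fun a b hba ha => le_trans hba ha, fun v hv => ?_⟩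
      obtain ⟨z, hz₁, hz₂⟩ := hdir n v hv
        (τ j ((window k O (m + n)).drop ((window k O (m + n)).length - (j + 1))))
        (hτ _ _ _ (by
          have := window_length k O (m + n)
          rw [List.getLast?_drop, if_neg (by omega), hlast]
          rfl))
      exact ⟨z, hz₂, hz₁⟩
    obtain ⟨m', hm'⟩ := hS (fun n => E (window k O (m + n))) (fun n => O (m + n)) hE
      fun n => (hσ _ _ (hlast (m + n))).2.1 (hdir n) ▸ hO (m + n)
    refine hmono (fun i => O (m + m' + i)) O (hwin _ fun n => ?_)
      fun n => ⟨n, hanti (by omega)⟩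
    rw [window_shift]
    have := hm' n
    simp only [E, Set.mem_ofPred_eq, ← add_assoc] at this ⊢
    exact this
  · push Not at hdir
    have hnone : ∀ n, ∀ h ≤ O n, ¬ DirectedBelow h := by
      intro n h hh hd
      exact hdir 1 (((hσ _ _ (hlast 0)).2.2.1 (hdir 0)
        ⟨h, hh.trans (hanti (Nat.zero_le n)), hd⟩).mono (hO 0))
    let W : ℕ → P := fun j => p (O j) j
    have hOτ : ∀ n, N (window k O n) = n → O (n + 1) ≤ τ n (window k W n) := by
      intro n hn
      have h := hO n
      rw [(hσ _ _ (hlast n)).2.2.2 (hnone n)] at h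
      simp only [M, hn, window_mapIdx] at h
      exact h
    have hN : ∀ n, N (window k O n) = n := by
      intro n
      induction n with
      | zero => simp [N, window_length, hk1]
      | succ n ih =>
        have hlen := window_length k O (n + 1)
        have hpen : (window k O (n + 1))[(window k O (n + 1)).length - 2]? = some (O n) := by
          rw [List.getElem?_eq_getElem (by omega), window_getElem]
          congr 2
          omega
        have hle : O (n + 1) ≤ p (O n) n :=
          (hOτ n ih).trans (hτ _ _ _ (window_getLast? hk1 W n))
        have hset : {j | ∃ u v, (window k O (n + 1))[(window k O (n + 1)).length - 2]? = some u ∧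
            (window k O (n + 1)).getLast? = some v ∧ v ≤ p u j} = {n} := by
          ext j
          simp only [Set.mem_ofPred_eq, Set.mem_singleton_iff, hpen, hlast, Option.some.injEq]
          constructor
          · rintro ⟨_, _, rfl, rfl, h⟩
            exact hp (O n) (hnone n) _ _ _ h hle
          · rintro rfl
            exact ⟨_, _, rfl, rfl, hle⟩
        simp only [N]
        rw [if_neg (by omega), hset, csInf_singleton]
    exact hmono W O (hwin W fun n => (hple _ _).trans (hOτ n (hN n))) fun n => ⟨n, hple _ _⟩

end Game

end BanachMazur

open BanachMazur in
/-- Theorem 4.26: if player TWO has a winning Markov `k`-tactic in the Banach-Mazur game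
on a topological space `X` (a legal `k`-tactic that may in addition depend on the inning
number), then TWO has a winning `k`-tactic in the Banach-Mazur game on `X`. A play
according to a tactic is a sequence `O` of nonempty open moves of ONE in which each
`O (n+1)` is contained in TWO's response to the window of ONE's most recent `min (n+1) k`
moves; TWO wins when `⋂ n, O n ≠ ∅`. -/
theorem stmt19 {X : Type u} [TopologicalSpace X] (k : ℕ) (hk : 1 ≤ k)
    (h : ∃ Υ : ℕ → List (Set X) → Set X,
      (∀ n : ℕ, GoodBMTactic k (Υ n)) ∧
      ∀ O : ℕ → Set X, (∀ n, IsOpen (O n) ∧ (O n).Nonempty) →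
        (∀ n, O (n + 1) ⊆ Υ n (window k O n)) →
        (⋂ n, O n).Nonempty) :
    ∃ Υ : List (Set X) → Set X,
      GoodBMTactic k Υ ∧
      ∀ O : ℕ → Set X, (∀ n, IsOpen (O n) ∧ (O n).Nonempty) →
        (∀ n, O (n + 1) ⊆ Υ (window k O n)) →
        (⋂ n, O n).Nonempty := by
  classical
  obtain ⟨Υ, hgood, hΥ⟩ := h
  let P := {U : Set X // IsOpen U ∧ U.Nonempty}
  by_cases hP : Nonempty P
  swap
  · refine ⟨fun _ => ∅, ?_, fun O hO _ => absurd ⟨⟨O 0, hO 0⟩⟩ hP⟩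
    intro l hl _ hV _
    obtain ⟨V, hVl⟩ := List.exists_mem_of_ne_nil l hl
    exact absurd ⟨⟨V, hV V hVl⟩⟩ hP
  let Win : (ℕ → P) → Prop := fun O => (⋂ n, (O n).1).Nonempty
  have hmono : ∀ W O : ℕ → P, Win W → (∀ n, ∃ m, W m ≤ O n) → Win O := by
    rintro W O ⟨x, hx⟩ hWO
    refine ⟨x, Set.mem_iInter.2 fun n => ?_⟩
    obtain ⟨m, hm⟩ := hWO n
    exact hm (Set.mem_iInter.1 hx m)
  have hτ : ∀ n (l : List P), ∃ t : P, (∀ u ∈ l.getLast?, t ≤ u) ∧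
      (l ≠ [] → l.length ≤ k → l.IsChain (· ≥ ·) → t.1 = Υ n (l.map Subtype.val)) := by
    intro n l
    cases hl : l.getLast? with
    | none =>
      exact ⟨Classical.arbitrary P, by simp,
        fun h => absurd (List.getLast?_eq_none_iff.1 hl) h⟩
    | some u =>
      by_cases hc : l ≠ [] ∧ l.length ≤ k ∧ l.IsChain (· ≥ ·)
      · obtain ⟨h₁, h₂, h₃⟩ := hgood n (l.map Subtype.val) (mt List.map_eq_nil_iff.1 hc.1)
          (by simpa using hc.2.1) (by
            intro V hV
            obtain ⟨v, -, rfl⟩ := List.mem_map.1 hV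
            exact v.2) ((List.isChain_map _).2 hc.2.2)
        refine ⟨⟨_, h₁, h₂⟩, ?_, fun _ _ _ => rfl⟩
        rintro _ ⟨⟩
        exact h₃ u.1 (by rw [List.getLast?_map, hl]; rfl)
      · refine ⟨u, ?_, fun a b c => absurd ⟨a, b, c⟩ hc⟩
        rintro _ ⟨⟩
        exact le_rfl
  choose τ hτle hτ using hτ
  have hwin : ∀ W : ℕ → P, (∀ n, W (n + 1) ≤ τ n (window k W n)) → Win W := by
    intro W hW
    have hanti : Antitone W := antitone_nat_of_succ_le fun n =>
      (hW n).trans (hτle _ _ _ (window_getLast? hk W n))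
    refine hΥ (fun n => (W n).1) (fun n => (W n).2) fun n => ?_
    rw [window_map]
    have hlen := window_length k W n
    rw [← hτ n (window k W n) (by
      intro h0
      rw [h0, List.length_nil] at hlen
      omega) (by omega) (by
        rw [List.isChain_iff_getElem]
        intro i hi
        rw [window_getElem, window_getElem]
        exact hanti (by omega))]
    exact hW n
  obtain ⟨σ, hσle, hσ⟩ : ∃ σ : List P → P, (∀ l, ∀ u ∈ l.getLast?, σ l ≤ u) ∧
      ∀ O : ℕ → P, (∀ n, O (n + 1) ≤ σ (window k O n)) → Win O := by
    rcases Nat.lt_or_ge k 2 with hk2 | hk2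
    · obtain rfl : k = 1 := by omega
      exact tactic_of_markov_one Win hmono τ hτle hwin
    · exact tactic_of_markov_of_two_le k hk2 Win hmono τ hτle hwin
  -- lists containing a set that is not open or is empty are given the junk value `∅`
  refine ⟨fun l => if hl : ∀ V ∈ l, IsOpen V ∧ V.Nonempty then (σ (l.attachWith _ hl)).1 else ∅,
    ?_, fun O hO hplay => ?_⟩
  · intro l _ _ hV _
    simp only [dif_pos hV]
    refine ⟨(σ _).2.1, (σ _).2.2, fun U hU => ?_⟩
    have hUl : U ∈ l := List.mem_of_getLast? hU
    refine hσle (l.attachWith _ hV) ⟨U, hV U hUl⟩ ?_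
    have hmap : (l.attachWith _ hV).getLast?.map Subtype.val = some U := by
      rw [← List.getLast?_map, List.attachWith_map_subtype_val, hU]
    obtain ⟨v, hv, hvU⟩ := Option.map_eq_some_iff.1 hmap
    rw [hv]
    exact congrArg some (Subtype.ext hvU)
  · refine hσ (fun n => ⟨O n, hO n⟩) fun n => ?_
    have hV : ∀ V ∈ window k O n, IsOpen V ∧ V.Nonempty := by
      intro V hV
      obtain ⟨i, -, rfl⟩ := List.mem_map.1 hV
      exact hO _
    have h := hplay n
    simp only [dif_pos hV] at h
    have heq : (window k O n).attachWith _ hV = window k (fun n => (⟨O n, hO n⟩ : P)) n := by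
      apply List.map_injective_iff.2 Subtype.val_injective
      rw [List.attachWith_map_subtype_val, ← window_map]
    rw [heq] at h
    exact h
end
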